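/- arXiv:1805.02485 — 2 statements merged into one kernel-verified Lean document; each statement's English description precedes it below -/
import Mathlib

section
/- Let μ be uniformly distributed (with respect to the unitarily invariant probability measure) on the complex unit sphere S_C^{d−1}, and let y ∈ S_C^{d−1} be fixed. For every ε ∈ [0,1], the probability that |⟨y, μ⟩| < ε is at most 2√(d/π)·ε. -/
open scoped InnerProductSpace Real
open MeasureTheory

/-- A unit vector can be moved to the first basis vector by a unitary. -/
lemma aux_unitary (n : ℕ) (y : EuclideanSpace ℂ (Fin (n + 1))) (hy : ‖y‖ = 1) :
    ∃ U : EuclideanSpace ℂ (Fin (n + 1)) ≃ₗᵢ[ℂ] EuclideanSpace ℂ (Fin (n + 1)),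
      ∀ x, ⟪y, x⟫_ℂ = (U x) 0 := by
  have hv : Orthonormal ℂ (({0} : Set (Fin (n + 1))).domRestrict (fun _ => y)) := by
    refine ⟨fun i => ?_, fun i j hij => ?_⟩
    · simpa using hy
    · exact absurd (Subsingleton.elim i j) hij
  obtain ⟨b, hb⟩ := hv.exists_orthonormalBasis_extension_of_card_eq (by simp)
  refine ⟨b.repr, fun x => ?_⟩
  rw [b.repr_apply_apply, hb 0 rfl]

section
variable (n : ℕ) [MeasurableSpace (EuclideanSpace ℂ (Fin n))] [BorelSpace (EuclideanSpace ℂ (Fin n))]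

/-- Lebesgue measure on `ℂ^n`. -/
noncomputable def leb : Measure (EuclideanSpace ℂ (Fin n)) :=
  (volume : Measure (Fin n → ℂ)).map (PiLp.continuousLinearEquiv 2 ℝ (fun _ : Fin n => ℂ)).symm

instance : (leb n).IsAddHaarMeasure := by
  unfold leb; infer_instance

lemma leb_map (U : EuclideanSpace ℂ (Fin n) ≃ₗᵢ[ℂ] EuclideanSpace ℂ (Fin n)) :
    (leb n).map U = leb n := by
  have h1 : ((leb n).map U).IsAddHaarMeasure :=
    ContinuousLinearEquiv.isAddHaarMeasure_map U.toContinuousLinearEquiv (leb n)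
  have h2 := Measure.isAddLeftInvariant_eq_smul ((leb n).map U) (leb n)
  have h3 : ((leb n).map U) (Metric.ball 0 1) = leb n (Metric.ball 0 1) := by
    rw [Measure.map_apply U.continuous.measurable measurableSet_ball]
    congr 1
    ext x
    simp
  rw [h2, Measure.smul_apply] at h3
  have hpos : leb n (Metric.ball 0 1) ≠ 0 := (Metric.measure_ball_pos _ _ one_pos).ne'
  have hfin : leb n (Metric.ball 0 1) ≠ ⊤ := measure_ball_lt_top.ne
  have h4 : Measure.addHaarScalarFactor ((leb n).map U) (leb n) = 1 := by
    have h5 : ((Measure.addHaarScalarFactor ((leb n).map U) (leb n) : NNReal) : ENNReal)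
        * leb n (Metric.ball 0 1) = 1 * leb n (Metric.ball 0 1) := by
      rw [one_mul]; exact h3
    exact_mod_cast (ENNReal.mul_left_inj hpos hfin).1 h5
  rw [h2, h4, one_smul]

lemma leb_apply (s : Set (EuclideanSpace ℂ (Fin n))) (hs : MeasurableSet s) :
    leb n s = volume {z : Fin n → ℂ | WithLp.toLp 2 z ∈ s} := by
  unfold leb
  rw [Measure.map_apply (ContinuousLinearEquiv.continuous _).measurable hs]
  rfl
end

lemma vol_ball (n : ℕ) : volume {z : Fin n → ℂ | ∑ i, ‖z i‖ ^ 2 < 1} =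
    ENNReal.ofReal (π ^ n / n.factorial) := by
  have h := Complex.volume_sum_rpow_lt_one (Fin n) (p := 2) (by norm_num)
  have e : (2 * (n : ℝ) / 2 + 1) = n + 1 := by ring
  simp only [Fintype.card_fin, e, Real.Gamma_nat_eq_factorial] at h
  norm_num at h
  exact h

lemma mem_ball_toLp (n : ℕ) (z : Fin n → ℂ) :
    (WithLp.toLp 2 z : EuclideanSpace ℂ (Fin n)) ∈ Metric.ball 0 1 ↔ ∑ i, ‖z i‖ ^ 2 < 1 := by
  rw [mem_ball_zero_iff, EuclideanSpace.norm_eq, Real.sqrt_lt' one_pos]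
  simp

lemma vol_slab (n : ℕ) (ε : ℝ) :
    volume {z : Fin (n + 1) → ℂ | ∑ i, ‖z i‖ ^ 2 < 1 ∧ ‖z 0‖ < ε} ≤
      ENNReal.ofReal ε ^ 2 * ENNReal.ofReal π * ENNReal.ofReal (π ^ n / n.factorial) := by
  have hmp := volume_preserving_piFinSuccAbove (fun _ : Fin (n + 1) => ℂ) 0
  have hsub : {z : Fin (n + 1) → ℂ | ∑ i, ‖z i‖ ^ 2 < 1 ∧ ‖z 0‖ < ε} ⊆
      (MeasurableEquiv.piFinSuccAbove (fun _ : Fin (n + 1) => ℂ) 0) ⁻¹'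
        (Metric.ball 0 ε ×ˢ {z : Fin n → ℂ | ∑ i, ‖z i‖ ^ 2 < 1}) := by
    rintro z ⟨h1, h2⟩
    rw [Fin.sum_univ_succ] at h1
    refine ⟨by simpa using h2, ?_⟩
    have : ∑ i : Fin n, ‖z i.succ‖ ^ 2 < 1 := by nlinarith [sq_nonneg ‖z 0‖]
    simpa [Fin.removeNth, Fin.tail] using this
  refine (measure_mono hsub).trans ?_
  rw [hmp.measure_preimage_equiv, Measure.volume_eq_prod, Measure.prod_prod, vol_ball,
    Complex.volume_ball]
  gcongr
  rw [ENNReal.ofReal, ← NNReal.coe_real_pi, Real.toNNReal_coe]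

theorem aux_main (n : ℕ)
    [MeasurableSpace (EuclideanSpace ℂ (Fin (n + 1)))]
    [BorelSpace (EuclideanSpace ℂ (Fin (n + 1)))]
    (P : Measure (EuclideanSpace ℂ (Fin (n + 1)))) [IsProbabilityMeasure P]
    (hsphere : P {x | ‖x‖ = 1} = 1)
    (hinv : ∀ U : EuclideanSpace ℂ (Fin (n + 1)) ≃ₗᵢ[ℂ] EuclideanSpace ℂ (Fin (n + 1)),
      P.map U = P)
    (y : EuclideanSpace ℂ (Fin (n + 1))) (hy : ‖y‖ = 1)
    (ε : ℝ) (hε : 0 < ε) :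
    P {μ | ‖⟪y, μ⟫_ℂ‖ < ε} ≤ ENNReal.ofReal ((n + 1) * ε ^ 2) := by
  have hmeas0 : MeasurableSet {x : (EuclideanSpace ℂ (Fin (n + 1))) | ‖x 0‖ < ε} :=
    (isOpen_lt (by fun_prop) continuous_const).measurableSet
  have hmeas1 : MeasurableSet {x : EuclideanSpace ℂ (Fin (n + 1)) |
      x ∈ Metric.ball 0 1 ∧ ‖x 0‖ < ε} :=
    measurableSet_ball.inter hmeas0
  have key : ∀ (Q : Measure (EuclideanSpace ℂ (Fin (n + 1)))), (∀ U : (EuclideanSpace ℂ (Fin (n + 1))) ≃ₗᵢ[ℂ] (EuclideanSpace ℂ (Fin (n + 1))), Q.map U = Q) → ∀ z : (EuclideanSpace ℂ (Fin (n + 1))), ‖z‖ = 1 →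
      Q {x | x ∈ Metric.ball 0 1 ∧ ‖⟪z, x⟫_ℂ‖ < ε} = Q {x | x ∈ Metric.ball 0 1 ∧ ‖x 0‖ < ε} ∧
      Q {x | ‖⟪z, x⟫_ℂ‖ < ε} = Q {x | ‖x 0‖ < ε} := by
    intro Q hQ z hz
    obtain ⟨U, hU⟩ := aux_unitary n z hz
    constructor
    · conv_rhs => rw [← hQ U]
      rw [Measure.map_apply U.continuous.measurable hmeas1]
      congr 1
      ext x
      simp [hU]
    · conv_rhs => rw [← hQ U]
      rw [Measure.map_apply U.continuous.measurable hmeas0]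
      congr 1
      ext x
      simp [hU]
  have hS : MeasurableSet {q : (EuclideanSpace ℂ (Fin (n + 1))) × (EuclideanSpace ℂ (Fin (n + 1))) | ‖⟪q.1, q.2⟫_ℂ‖ < ε} :=
    (isOpen_lt (by fun_prop) continuous_const).measurableSet
  set p := P {μ | ‖⟪y, μ⟫_ℂ‖ < ε} with hp
  have hlow : ∀ z ∈ Metric.ball (0 : (EuclideanSpace ℂ (Fin (n + 1)))) 1, p ≤ P {x | ‖⟪z, x⟫_ℂ‖ < ε} := by
    intro z hz
    rw [mem_ball_zero_iff] at hz
    by_cases h0 : z = 0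
    · subst h0
      simpa [hε] using prob_le_one
    · have hz0 : 0 < ‖z‖ := norm_pos_iff.2 h0
      set w : (EuclideanSpace ℂ (Fin (n + 1))) := ((‖z‖⁻¹ : ℝ) : ℂ) • z
      have hw : ‖w‖ = 1 := by
        rw [norm_smul, Complex.norm_real, norm_inv, norm_norm, inv_mul_cancel₀ hz0.ne']
      have hzw : z = ((‖z‖ : ℝ) : ℂ) • w := by
        simp [w, smul_smul, hz0.ne']
      rw [hp, (key P hinv y hy).2, ← (key P hinv w hw).2]
      apply measure_mono
      intro x hx
      simp only [Set.mem_ofPred_eq] at hx ⊢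
      rw [hzw, inner_smul_left, norm_mul]
      simp only [Complex.conj_ofReal, Complex.norm_real, norm_norm]
      nlinarith [norm_nonneg ⟪w, x⟫_ℂ]
  have hq : ∀ᵐ x ∂P, ((leb (n + 1)).restrict (Metric.ball 0 1)) {z | ‖⟪z, x⟫_ℂ‖ < ε} ≤
      ENNReal.ofReal ε ^ 2 * ENNReal.ofReal π * ENNReal.ofReal (π ^ n / n.factorial) := by
    have hs : ∀ᵐ x ∂P, ‖x‖ = 1 := by
      rw [← prob_compl_eq_zero_iff (measurableSet_eq_fun (by fun_prop) (by fun_prop))] at hsphere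
      exact hsphere
    filter_upwards [hs] with x hx
    have hm : MeasurableSet {z : (EuclideanSpace ℂ (Fin (n + 1))) | ‖⟪z, x⟫_ℂ‖ < ε} :=
      (isOpen_lt (by fun_prop) continuous_const).measurableSet
    rw [Measure.restrict_apply hm]
    have e : {z : (EuclideanSpace ℂ (Fin (n + 1))) | ‖⟪z, x⟫_ℂ‖ < ε} ∩ Metric.ball 0 1 =
        {z | z ∈ Metric.ball 0 1 ∧ ‖⟪x, z⟫_ℂ‖ < ε} := by
      ext z
      rw [Set.mem_inter_iff, Set.mem_ofPred_eq, Set.mem_ofPred_eq, norm_inner_symm z x, and_comm]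
    rw [e, (key _ (leb_map (n + 1)) x hx).1, leb_apply _ _ hmeas1]
    refine le_trans (le_of_eq ?_) (vol_slab n ε)
    congr 1
    ext z
    simp only [Set.mem_ofPred_eq, mem_ball_toLp]
  have hB : leb (n + 1) (Metric.ball 0 1) =
      ENNReal.ofReal (π ^ (n + 1) / (n + 1).factorial) := by
    rw [leb_apply _ _ measurableSet_ball, ← vol_ball]
    simp only [mem_ball_toLp]
  have hmain : p * leb (n + 1) (Metric.ball 0 1) ≤
      ENNReal.ofReal ε ^ 2 * ENNReal.ofReal π * ENNReal.ofReal (π ^ n / n.factorial) := by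
    calc p * leb (n + 1) (Metric.ball 0 1)
        = ∫⁻ z in Metric.ball 0 1, p ∂(leb (n + 1)) := by simp
      _ ≤ ∫⁻ z in Metric.ball 0 1, P {x | ‖⟪z, x⟫_ℂ‖ < ε} ∂(leb (n + 1)) :=
          setLIntegral_mono' measurableSet_ball hlow
      _ = (((leb (n + 1)).restrict (Metric.ball 0 1)).prod P) {q : (EuclideanSpace ℂ (Fin (n + 1))) × (EuclideanSpace ℂ (Fin (n + 1))) | ‖⟪q.1, q.2⟫_ℂ‖ < ε} := by
          rw [Measure.prod_apply hS]; rfl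
      _ = ∫⁻ x, ((leb (n + 1)).restrict (Metric.ball 0 1)) {z | ‖⟪z, x⟫_ℂ‖ < ε} ∂P := by
          rw [Measure.prod_apply_symm hS]; rfl
      _ ≤ ∫⁻ x, ENNReal.ofReal ε ^ 2 * ENNReal.ofReal π * ENNReal.ofReal (π ^ n / n.factorial) ∂P :=
          lintegral_mono_ae hq
      _ = _ := by simp
  have hBpos : 0 < π ^ (n + 1) / ((n + 1).factorial : ℝ) := by positivity
  rw [hB] at hmain
  have hrhs : ENNReal.ofReal ε ^ 2 * ENNReal.ofReal π * ENNReal.ofReal (π ^ n / n.factorial) =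
      ENNReal.ofReal ((n + 1) * ε ^ 2) * ENNReal.ofReal (π ^ (n + 1) / (n + 1).factorial) := by
    rw [← ENNReal.ofReal_pow hε.le, ← ENNReal.ofReal_mul (by positivity),
      ← ENNReal.ofReal_mul (by positivity), ← ENNReal.ofReal_mul (by positivity)]
    congr 1
    rw [Nat.factorial_succ]
    push_cast
    field_simp
    try ring
  rw [hrhs] at hmain
  exact (ENNReal.mul_le_mul_iff_left (by simpa using hBpos) ENNReal.ofReal_ne_top).1 hmain

theorem stmt_11 (d : ℕ)
    [MeasurableSpace (EuclideanSpace ℂ (Fin d))]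
    [BorelSpace (EuclideanSpace ℂ (Fin d))]
    (P : Measure (EuclideanSpace ℂ (Fin d))) [IsProbabilityMeasure P]
    (hsphere : P {x | ‖x‖ = 1} = 1)
    (hinv : ∀ U : EuclideanSpace ℂ (Fin d) ≃ₗᵢ[ℂ] EuclideanSpace ℂ (Fin d),
      P.map U = P)
    (y : EuclideanSpace ℂ (Fin d)) (hy : ‖y‖ = 1)
    (ε : ℝ) (hε : ε ∈ Set.Icc (0 : ℝ) 1) :
    (P {μ | ‖⟪y, μ⟫_ℂ‖ < ε}).toReal ≤ 2 * Real.sqrt (d / π) * ε := by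
  rcases d with _ | n
  · rw [Subsingleton.elim y 0] at hy
    simp at hy
  rcases hε.1.eq_or_lt with h0 | h0
  · subst h0
    simp [not_lt.2 (norm_nonneg _)]
  have h1 := aux_main n P hsphere hinv y hy ε h0
  have h2 : (P {μ | ‖⟪y, μ⟫_ℂ‖ < ε}).toReal ≤ (n + 1) * ε ^ 2 :=
    ENNReal.toReal_le_of_le_ofReal (by positivity) h1
  have h3 : (P {μ | ‖⟪y, μ⟫_ℂ‖ < ε}).toReal ≤ 1 := by
    have := ENNReal.toReal_mono ENNReal.one_ne_top
      (prob_le_one (μ := P) (s := {μ | ‖⟪y, μ⟫_ℂ‖ < ε}))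
    simpa using this
  have h4 : (P {μ | ‖⟪y, μ⟫_ℂ‖ < ε}).toReal ≤ Real.sqrt (n + 1) * ε := by
    have hs : Real.sqrt ((n : ℝ) + 1) ^ 2 = n + 1 := Real.sq_sqrt (by positivity)
    have hs0 : 0 ≤ Real.sqrt ((n : ℝ) + 1) * ε := by positivity
    rw [← hs, ← mul_pow] at h2
    rcases le_total (Real.sqrt ((n : ℝ) + 1) * ε) 1 with h | h
    · nlinarith
    · linarith
  refine h4.trans ?_
  apply mul_le_mul_of_nonneg_right _ h0.le
  rw [show (2 : ℝ) = Real.sqrt (2 ^ 2) by simp, ← Real.sqrt_mul (by norm_num)]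
  apply Real.sqrt_le_sqrt
  push_cast
  rw [← mul_div_assoc, le_div_iff₀ Real.pi_pos]
  nlinarith [Real.pi_le_four, (Nat.cast_nonneg n : (0 : ℝ) ≤ n)]
end

section
/- Let z_1,...,z_M ∈ C^d be pairwise distinct, ε ∈ [0,1], and μ uniformly distributed on the complex unit sphere S_C^{d−1}. Then the probability that there exist indices i ≠ j with |⟨z_i − z_j, μ⟩| < ε‖z_i − z_j‖ is at most C(M,2) · 2√(d/π) · ε, where C(M,2) = M(M−1)/2. -/
open scoped InnerProductSpace Real
open MeasureTheory

lemma gbox (δ : ℝ) (hδ : 0 ≤ δ) :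
    ProbabilityTheory.gaussianReal 0 1 (Set.Icc (-δ) δ) ≤
      ENNReal.ofReal (2 * δ / √(2 * π)) := by
  rw [ProbabilityTheory.gaussianReal_apply _ one_ne_zero]
  calc _ ≤ ∫⁻ x in Set.Icc (-δ) δ, ENNReal.ofReal ((√(2 * π))⁻¹) := by
        refine lintegral_mono fun x => ?_
        simp only [ProbabilityTheory.gaussianPDF]
        apply ENNReal.ofReal_le_ofReal
        simp only [ProbabilityTheory.gaussianPDFReal, NNReal.coe_one, mul_one]
        refine mul_le_of_le_one_right (by positivity) ?_
        rw [Real.exp_le_one_iff]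
        nlinarith [sq_nonneg (x - 0)]
    _ = _ := by
        rw [lintegral_const, Measure.restrict_apply_univ, Real.volume_Icc,
          ← ENNReal.ofReal_mul (by positivity)]
        congr 1
        ring

lemma gsq : ∫⁻ x, ENNReal.ofReal (x ^ 2) ∂(ProbabilityTheory.gaussianReal 0 1) = 1 := by
  have hm : MemLp (fun x : ℝ => x) 2 (ProbabilityTheory.gaussianReal 0 1) :=
    ProbabilityTheory.memLp_id_gaussianReal 2
  rw [← ofReal_integral_eq_lintegral_ofReal]
  · have h := ProbabilityTheory.variance_fun_id_gaussianReal (μ := 0) (v := 1)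
    rw [ProbabilityTheory.variance_eq_sub hm] at h
    simp at h
    simp [h]
  · exact hm.integrable_sq
  · exact Filter.Eventually.of_forall fun x => sq_nonneg x

lemma gauss_bound (m : ℕ) (a : ℝ) (ha : 0 ≤ a) :
    Measure.pi (fun _ : Fin 2 ⊕ Fin m => ProbabilityTheory.gaussianReal 0 1)
      {w | w (.inl 0) ^ 2 + w (.inl 1) ^ 2 ≤ a * ∑ k, w (.inr k) ^ 2} ≤
      ENNReal.ofReal (2 * a * m / π) := by
  have hms : MeasurableSet {w : Fin 2 ⊕ Fin m → ℝ |
      w (.inl 0) ^ 2 + w (.inl 1) ^ 2 ≤ a * ∑ k, w (.inr k) ^ 2} :=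
    measurableSet_le (by fun_prop) (by fun_prop)
  have hmp := measurePreserving_sumPiEquivProdPi_symm (ι := Fin 2) (ι' := Fin m)
    (X := fun _ => ℝ) (fun _ => ProbabilityTheory.gaussianReal 0 1)
  rw [← hmp.measure_preimage hms.nullMeasurableSet,
    Measure.prod_apply_symm (hmp.measurable hms)]
  have key : ∀ w : Fin m → ℝ,
      Measure.pi (fun _ : Fin 2 => ProbabilityTheory.gaussianReal 0 1)
        {p | p 0 ^ 2 + p 1 ^ 2 ≤ a * ∑ k, w k ^ 2} ≤
      ENNReal.ofReal (2 * a / π) * ∑ k, ENNReal.ofReal (w k ^ 2) := by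
    intro w
    set s := a * ∑ k, w k ^ 2 with hs
    have hs0 : 0 ≤ s := by positivity
    calc _ ≤ Measure.pi (fun _ : Fin 2 => ProbabilityTheory.gaussianReal 0 1)
          (Set.pi Set.univ fun _ => Set.Icc (-√s) √s) := by
          apply measure_mono
          intro p hp i _
          simp only [Set.mem_setOf_eq] at hp
          rw [Set.mem_Icc, ← abs_le]
          apply Real.abs_le_sqrt
          fin_cases i
          · simp; nlinarith [sq_nonneg (p 1)]
          · simp; nlinarith [sq_nonneg (p 0)]
      _ ≤ ENNReal.ofReal (2 * √s / √(2 * π)) * ENNReal.ofReal (2 * √s / √(2 * π)) := by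
          rw [Measure.pi_pi, Fin.prod_univ_two]
          gcongr <;> exact gbox _ (Real.sqrt_nonneg _)
      _ = _ := by
          rw [← ENNReal.ofReal_sum_of_nonneg (fun _ _ => sq_nonneg _),
            ← ENNReal.ofReal_mul (by positivity), ← ENNReal.ofReal_mul (by positivity)]
          congr 1
          have h1 : √(2 * π) * √(2 * π) = 2 * π := Real.mul_self_sqrt (by positivity)
          have h2 : √s * √s = s := Real.mul_self_sqrt hs0
          rw [div_mul_div_comm, h1, show 2 * √s * (2 * √s) = 4 * (√s * √s) by ring, h2, hs]
          field_simp
          ring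
  calc _ ≤ ∫⁻ w, ENNReal.ofReal (2 * a / π) * ∑ k, ENNReal.ofReal (w k ^ 2)
        ∂(Measure.pi fun _ : Fin m => ProbabilityTheory.gaussianReal 0 1) :=
        lintegral_mono fun w => key w
    _ = ENNReal.ofReal (2 * a * m / π) := by
        rw [lintegral_const_mul _ (by fun_prop), lintegral_finsetSum _ (by fun_prop)]
        have : ∀ k : Fin m, ∫⁻ w, ENNReal.ofReal (w k ^ 2)
            ∂(Measure.pi fun _ : Fin m => ProbabilityTheory.gaussianReal 0 1) = 1 := by
          intro k
          rw [← gsq]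
          exact (measurePreserving_eval (fun _ : Fin m => ProbabilityTheory.gaussianReal 0 1)
            k).lintegral_comp (f := fun x => ENNReal.ofReal (x ^ 2)) (by fun_prop)
        simp only [this, Finset.sum_const, Finset.card_univ, Fintype.card_fin, nsmul_eq_mul,
          mul_one]
        rw [← ENNReal.ofReal_natCast, ← ENNReal.ofReal_mul (by positivity)]
        congr 1
        ring

section abstractE

variable {E : Type*} [NormedAddCommGroup E] [InnerProductSpace ℂ E] [FiniteDimensional ℂ E]
  [MeasurableSpace E] [BorelSpace E]

attribute [local instance] InnerProductSpace.complexToReal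

lemma cone_bound (m : ℕ) (hm : Module.finrank ℝ E = 2 + m) (x : E) (hx : ‖x‖ = 1)
    (ε : ℝ) (h0 : 0 ≤ ε) (h1 : ε < 1) :
    ProbabilityTheory.stdGaussian E {y | ‖⟪y, x⟫_ℂ‖ ≤ ε * ‖y‖} ≤
      ENNReal.ofReal (2 * (ε ^ 2 / (1 - ε ^ 2)) * m / π) := by
  have hre : ∀ u v : E, ⟪u, v⟫_ℝ = (⟪u, v⟫_ℂ).re := fun u v => rfl
  have hxx : ⟪x, x⟫_ℂ = 1 := by rw [inner_self_eq_norm_sq_to_K, hx]; simp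
  obtain ⟨b, hb⟩ := Orthonormal.exists_orthonormalBasis_extension_of_card_eq (𝕜 := ℝ) (E := E)
    (ι := Fin 2 ⊕ Fin m) (by simpa using hm)
    (v := Sum.elim ![x, Complex.I • x] (fun _ => 0)) (s := Set.range Sum.inl) (by
      rw [orthonormal_iff_ite]
      rintro ⟨_, i, rfl⟩ ⟨_, j, rfl⟩
      fin_cases i <;> fin_cases j <;>
        simp [Set.domRestrict, hre, hx, norm_smul, ← Complex.ofReal_pow])
  have hb0 : b (.inl 0) = x := by simpa using hb (.inl 0) ⟨0, rfl⟩
  have hb1 : b (.inl 1) = Complex.I • x := by simpa using hb (.inl 1) ⟨1, rfl⟩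
  rw [ProbabilityTheory.stdGaussian_eq_map_pi_orthonormalBasis b]
  have hms : MeasurableSet {y : E | ‖⟪y, x⟫_ℂ‖ ≤ ε * ‖y‖} :=
    (isClosed_le (by fun_prop) (by fun_prop)).measurableSet
  rw [Measure.map_apply (by fun_prop) hms]
  have he : 0 < 1 - ε ^ 2 := by nlinarith
  refine le_trans (measure_mono ?_) (gauss_bound m (ε ^ 2 / (1 - ε ^ 2)) (by positivity))
  intro w hw
  simp only [Set.mem_preimage, Set.mem_setOf_eq] at hw ⊢
  set y := ∑ i, w i • b i with hy
  have hc : ∀ i, ⟪y, b i⟫_ℝ = w i := by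
    intro i
    rw [real_inner_comm, hy]
    exact b.orthonormal.inner_right_fintype w i
  have hn : ‖y‖ ^ 2 = w (.inl 0) ^ 2 + w (.inl 1) ^ 2 + ∑ k, w (.inr k) ^ 2 := by
    rw [← b.sum_sq_norm_inner_left y]
    simp only [hc, Real.norm_eq_abs, sq_abs, Fintype.sum_sum_type, Fin.sum_univ_two]
  have hin : ‖⟪y, x⟫_ℂ‖ ^ 2 = w (.inl 0) ^ 2 + w (.inl 1) ^ 2 := by
    rw [← hc (.inl 0), ← hc (.inl 1), hb0, hb1, hre, hre, inner_smul_right, Complex.sq_norm,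
      Complex.normSq_apply]
    simp
    ring
  have hsq : ‖⟪y, x⟫_ℂ‖ ^ 2 ≤ ε ^ 2 * ‖y‖ ^ 2 := by
    rw [← mul_pow]; gcongr
  rw [hin, hn] at hsq
  rw [div_mul_eq_mul_div, le_div_iff₀ he]
  nlinarith

lemma exists_unitary (x y : E) (hx : ‖x‖ = 1) (hy : ‖y‖ = 1) :
    ∃ U : E ≃ₗᵢ[ℂ] E, U x = y := by
  have hE : Module.finrank ℂ E ≠ 0 := by
    intro h
    have := Module.finrank_zero_iff.1 h
    rw [Subsingleton.elim x 0] at hx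
    simp at hx
  obtain ⟨n, hn⟩ := Nat.exists_eq_succ_of_ne_zero hE
  have key : ∀ z : E, ‖z‖ = 1 → ∃ b : OrthonormalBasis (Fin (n+1)) ℂ E, b 0 = z := by
    intro z hz
    obtain ⟨b, hb⟩ := Orthonormal.exists_orthonormalBasis_extension_of_card_eq (𝕜 := ℂ) (E := E)
      (ι := Fin (n+1)) (by simpa using hn)
      (v := fun _ => z) (s := {0}) (by
        rw [orthonormal_iff_ite]
        rintro ⟨_, rfl⟩ ⟨_, rfl⟩
        simp [Set.domRestrict, inner_self_eq_norm_sq_to_K, hz])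
    exact ⟨b, hb 0 rfl⟩
  obtain ⟨b, hb⟩ := key x hx
  obtain ⟨c, hc⟩ := key y hy
  refine ⟨b.equiv c (Equiv.refl _), ?_⟩
  rw [← hb, b.equiv_apply_basis, ← hc]
  rfl

lemma single_pair (P : Measure E) [IsProbabilityMeasure P]
    (hsphere : P {x | ‖x‖ = 1} = 1) (hinv : ∀ U : E ≃ₗᵢ[ℂ] E, P.map U = P)
    (z : E) (hz : z ≠ 0) (ε : ℝ) (h0 : 0 ≤ ε) :
    P {x | ‖⟪z, x⟫_ℂ‖ < ε * ‖z‖} ≤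
      ENNReal.ofReal (2 * √(Module.finrank ℂ E / π) * ε) := by
  set d := Module.finrank ℂ E with hd
  have : Nontrivial E := ⟨z, 0, hz⟩
  have hd1 : 1 ≤ d := Module.finrank_pos
  have hd1' : (1 : ℝ) ≤ d := by exact_mod_cast hd1
  set r := 2 * √(d / π) * ε with hr
  have hr0 : 0 ≤ r := by positivity
  have hr2 : r ^ 2 = 4 / π * d * ε ^ 2 := by
    rw [hr, mul_pow, mul_pow, Real.sq_sqrt (by positivity)]; ring
  rcases le_or_gt 1 r with h | h
  · exact prob_le_one.trans (by simpa using h)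
  have hdε : d * ε ^ 2 < 1 := by
    have h2 : 4 / π * d * ε ^ 2 < 1 := by rw [← hr2]; nlinarith
    have h3 : 4 * (d * ε ^ 2) < π := by
      rw [div_mul_eq_mul_div, div_mul_eq_mul_div, div_lt_one Real.pi_pos] at h2
      linarith
    linarith [Real.pi_le_four]
  have hε1 : ε < 1 := by nlinarith
  have he : 0 < 1 - ε ^ 2 := by nlinarith
  have hfr : Module.finrank ℝ E = 2 + (2 * d - 2) := by
    rw [finrank_real_of_complex]; omega
  have hconst : ∀ y : E, P {x | ‖⟪z, x⟫_ℂ‖ < ε * ‖z‖} ≤ P {x | ‖⟪y, x⟫_ℂ‖ ≤ ε * ‖y‖} := by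
    intro y
    by_cases hy : y = 0
    · simp [hy, prob_le_one]
    have hnz : 0 < ‖z‖ := norm_pos_iff.2 hz
    have hny : 0 < ‖y‖ := norm_pos_iff.2 hy
    obtain ⟨U, hU⟩ := exists_unitary (((‖z‖⁻¹ : ℝ) : ℂ) • z) (((‖y‖⁻¹ : ℝ) : ℂ) • y)
      (by rw [norm_smul]; simp [hnz.ne']) (by rw [norm_smul]; simp [hny.ne'])
    conv_rhs => rw [← hinv U]
    rw [Measure.map_apply U.continuous.measurable
      (isClosed_le (by fun_prop) (by fun_prop)).measurableSet]
    apply measure_mono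
    intro x hx
    simp only [Set.mem_preimage, Set.mem_setOf_eq] at hx ⊢
    have h1 := U.inner_map_map (((‖z‖⁻¹ : ℝ) : ℂ) • z) x
    rw [hU, inner_smul_left, inner_smul_left] at h1
    have h2 := congrArg norm h1
    simp only [norm_mul, Complex.conj_ofReal, Complex.norm_real, norm_inv, norm_norm] at h2
    rw [inv_mul_eq_div, inv_mul_eq_div, div_eq_iff hny.ne'] at h2
    rw [h2]
    gcongr
    rw [div_le_iff₀ hnz]
    exact hx.le
  set γ := ProbabilityTheory.stdGaussian E
  have hms : MeasurableSet {p : E × E | ‖⟪p.1, p.2⟫_ℂ‖ ≤ ε * ‖p.1‖} := 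
    (isClosed_le (by fun_prop) (by fun_prop)).measurableSet
  have hB : 2 * (ε ^ 2 / (1 - ε ^ 2)) * ((2 * d - 2 : ℕ) : ℝ) / π ≤ r := by
    have hc : ((2 * d - 2 : ℕ) : ℝ) = 2 * (d - 1) := by
      rw [Nat.cast_sub (by omega)]; push_cast; ring
    have : (d - 1) * (ε ^ 2 / (1 - ε ^ 2)) ≤ d * ε ^ 2 := by
      rw [mul_div_assoc', div_le_iff₀ he]
      nlinarith [sq_nonneg ε]
    calc _ = 4 / π * ((d - 1) * (ε ^ 2 / (1 - ε ^ 2))) := by rw [hc]; ring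
      _ ≤ 4 / π * (d * ε ^ 2) := by gcongr
      _ = r ^ 2 := by rw [hr2]; ring
      _ ≤ r := by nlinarith
  calc P {x | ‖⟪z, x⟫_ℂ‖ < ε * ‖z‖} = ∫⁻ y, P {x | ‖⟪z, x⟫_ℂ‖ < ε * ‖z‖} ∂γ := by simp
    _ ≤ ∫⁻ y, P {x | ‖⟪y, x⟫_ℂ‖ ≤ ε * ‖y‖} ∂γ := lintegral_mono hconst
    _ = (γ.prod P) {p : E × E | ‖⟪p.1, p.2⟫_ℂ‖ ≤ ε * ‖p.1‖} := (Measure.prod_apply hms).symm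
    _ = ∫⁻ x, γ {y | ‖⟪y, x⟫_ℂ‖ ≤ ε * ‖y‖} ∂P := Measure.prod_apply_symm hms
    _ ≤ ∫⁻ x, ENNReal.ofReal r ∂P := by
        apply lintegral_mono_ae
        have hae : ∀ᵐ x ∂P, ‖x‖ = 1 := by
          rw [← prob_compl_eq_zero_iff
            (isClosed_eq continuous_norm continuous_const).measurableSet] at hsphere
          exact hsphere
        filter_upwards [hae] with x hx
        exact (cone_bound _ hfr x hx ε h0 hε1).trans (ENNReal.ofReal_le_ofReal hB)
    _ = _ := by simp

end abstractE

theorem stmt_17 (d M : ℕ)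
    [MeasurableSpace (EuclideanSpace ℂ (Fin d))]
    [BorelSpace (EuclideanSpace ℂ (Fin d))]
    (P : Measure (EuclideanSpace ℂ (Fin d))) [IsProbabilityMeasure P]
    (hsphere : P {x | ‖x‖ = 1} = 1)
    (hinv : ∀ U : EuclideanSpace ℂ (Fin d) ≃ₗᵢ[ℂ] EuclideanSpace ℂ (Fin d),
      P.map U = P)
    (z : Fin M → EuclideanSpace ℂ (Fin d)) (hz : Function.Injective z)
    (ε : ℝ) (hε : ε ∈ Set.Icc (0 : ℝ) 1) :
    (P {μ | ∃ i j : Fin M, i ≠ j ∧ ‖⟪z i - z j, μ⟫_ℂ‖ < ε * ‖z i - z j‖}).toReal ≤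
      (M * (M - 1) / 2 : ℝ) * (2 * Real.sqrt (d / π)) * ε := by
  obtain ⟨h0, h1⟩ := hε
  set A : Fin M × Fin M → Set (EuclideanSpace ℂ (Fin d)) :=
    fun p => {μ | ‖⟪z p.1 - z p.2, μ⟫_ℂ‖ < ε * ‖z p.1 - z p.2‖} with hA
  set S : Finset (Fin M × Fin M) := Finset.univ.filter fun p => p.1 < p.2 with hS
  have hsub : {μ | ∃ i j : Fin M, i ≠ j ∧ ‖⟪z i - z j, μ⟫_ℂ‖ < ε * ‖z i - z j‖} ⊆
      ⋃ p ∈ S, A p := by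
    rintro μ ⟨i, j, hij, h⟩
    simp only [Set.mem_iUnion]
    rcases lt_or_gt_of_ne hij with hlt | hlt
    · exact ⟨(i, j), by simp [hS, hlt], h⟩
    · refine ⟨(j, i), by simp [hS, hlt], ?_⟩
      simp only [hA, Set.mem_setOf_eq]
      rw [← neg_sub (z i) (z j), inner_neg_left, norm_neg, norm_neg]
      exact h
  have hcard : (S.card : ℝ) = M * (M - 1) / 2 := by
    have hc : S.card = ∑ j : Fin M, (j : ℕ) := by
      rw [hS, Finset.card_filter, Fintype.sum_prod_type_right]
      refine Finset.sum_congr rfl fun j _ => ?_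
      rw [← Finset.card_filter]
      simpa [Finset.filter_gt_eq_Iio] using Fin.card_Iio j
    rw [hc, Fin.sum_univ_eq_sum_range (fun i => i) M]
    have := Finset.sum_range_id_mul_two M
    have h3 : ((∑ i ∈ Finset.range M, i : ℕ) : ℝ) * 2 = M * (M - 1) := by
      rcases M with _ | M
      · simp
      · have h4 : ((∑ i ∈ Finset.range (M+1), i : ℕ) : ℝ) * 2 = ((M + 1 : ℕ) : ℝ) * (M : ℕ) := by
          exact_mod_cast this
        rw [h4]; push_cast; ring
    linarith
  have hr0 : 0 ≤ 2 * √(d / π) * ε := by positivity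
  have hle : P {μ | ∃ i j : Fin M, i ≠ j ∧ ‖⟪z i - z j, μ⟫_ℂ‖ < ε * ‖z i - z j‖} ≤
      ENNReal.ofReal ((M * (M - 1) / 2 : ℝ) * (2 * √(d / π)) * ε) := by
    calc _ ≤ P (⋃ p ∈ S, A p) := measure_mono hsub
      _ ≤ ∑ p ∈ S, P (A p) := measure_biUnion_finset_le _ _
      _ ≤ ∑ p ∈ S, ENNReal.ofReal (2 * √(d / π) * ε) := by
          refine Finset.sum_le_sum fun p hp => ?_
          have hp' : p.1 ≠ p.2 := by
            simp only [hS, Finset.mem_filter] at hp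
            exact hp.2.ne
          have := single_pair P hsphere hinv (z p.1 - z p.2)
            (sub_ne_zero.2 fun h => hp' (hz h)) ε h0
          rwa [finrank_euclideanSpace_fin] at this
      _ = _ := by
          rw [Finset.sum_const, nsmul_eq_mul, ← ENNReal.ofReal_natCast,
            ← ENNReal.ofReal_mul (by positivity), hcard]
          congr 1
          ring
  refine ENNReal.toReal_le_of_le_ofReal ?_ hle
  rw [← hcard]
  positivity
end
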